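/- At every point x ∈ U with x ≠ 0, one has Σ_{j=1}^n (∂_j a)(∂_j R) + (n−2) ((x · ∇a)/|x|²) R = (a/2) Σ_{j,k=1}^n ( (∂_k a)(∂_j T^{j,k}) − (∂_j a)(∂_k T^{j,k}) ), where the double sum extends over all pairs j ≠ k (note that since a is radial, (x · ∇a)/|x| equals the radial derivative a′ of a, so the second term on the left is (n−2) a′ R / |x|). -/

import Mathlib

/-- Partial derivative in direction `i` of a function on `ℝⁿ`. -/
noncomputable def pd {n : ℕ} (i : Fin n) (f : EuclideanSpace ℝ (Fin n) → ℝ)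
    (x : EuclideanSpace ℝ (Fin n)) : ℝ :=
  fderiv ℝ f x (EuclideanSpace.single i 1)

theorem pd_mul_aux {n : ℕ} (i : Fin n) {f g : EuclideanSpace ℝ (Fin n) → ℝ}
    {x : EuclideanSpace ℝ (Fin n)} (hf : DifferentiableAt ℝ f x) (hg : DifferentiableAt ℝ g x) :
    pd i (fun y => f y * g y) x = f x * pd i g x + g x * pd i f x := by
  unfold pd
  rw [fderiv_fun_mul hf hg]
  simp

theorem pd_sum_aux {n : ℕ} (i : Fin n) {f : Fin n → EuclideanSpace ℝ (Fin n) → ℝ}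
    {x : EuclideanSpace ℝ (Fin n)} (hf : ∀ k, DifferentiableAt ℝ (f k) x) :
    pd i (fun y => ∑ k, f k y) x = ∑ k, pd i (f k) x := by
  unfold pd
  rw [fderiv_fun_sum (fun k _ => hf k)]
  simp

theorem coord_diff {n : ℕ} (k : Fin n) (x : EuclideanSpace ℝ (Fin n)) :
    DifferentiableAt ℝ (fun y : EuclideanSpace ℝ (Fin n) => y k) x :=
  (EuclideanSpace.proj (𝕜 := ℝ) k).differentiableAt

theorem pd_coord {n : ℕ} (i k : Fin n) (x : EuclideanSpace ℝ (Fin n)) :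
    pd i (fun y : EuclideanSpace ℝ (Fin n) => y k) x = if k = i then 1 else 0 := by
  unfold pd
  have h : fderiv ℝ (fun y : EuclideanSpace ℝ (Fin n) => y k) x
      = EuclideanSpace.proj (𝕜 := ℝ) k :=
    (EuclideanSpace.proj (𝕜 := ℝ) k).hasFDerivAt.fderiv
  rw [h]
  simp

/-- Section 5: at every `x ∈ U` with `x ≠ 0`,
`∑_j a_j R_j + (n−2) ((x·∇a)/|x|²) R = (a/2) ∑_{j ≠ k} (a_k (T^{j,k})_j − a_j (T^{j,k})_k)`,
in any dimension `n ≥ 2`. -/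
theorem stmt12 (n : ℕ) (hn : 2 ≤ n)
    (U : Set (EuclideanSpace ℝ (Fin n))) (hU : IsOpen U)
    (a u : EuclideanSpace ℝ (Fin n) → ℝ)
    (ha : ContDiffOn ℝ (⊤ : ℕ∞) a U) (hapos : ∀ x ∈ U, 0 < a x)
    (hrad : ∀ (j k : Fin n), ∀ x ∈ U, x j * pd k a x - x k * pd j a x = 0)
    (hu : ContDiffOn ℝ (⊤ : ℕ∞) u U)
    (heq : ∀ x ∈ U, a x * (∑ i, pd i (pd i u) x) + ∑ i, pd i a x * pd i u x = 0)
    (T : Fin n → Fin n → EuclideanSpace ℝ (Fin n) → ℝ)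
    (hT : ∀ j k x, T j k x = -(x k) * pd j u x + x j * pd k u x)
    (R : EuclideanSpace ℝ (Fin n) → ℝ)
    (hR : ∀ x, R x = a x * ∑ k, x k * pd k u x) :
    ∀ x ∈ U, x ≠ 0 →
      (∑ j, pd j a x * pd j R x)
        + ((n : ℝ) - 2) * ((∑ i, x i * pd i a x) / ‖x‖ ^ 2) * R x
      = (a x / 2) * ∑ j, ∑ k,
          if j = k then 0
          else pd k a x * pd j (T j k) x - pd j a x * pd k (T j k) x := by
  intro x hx hx0
  have hUx : U ∈ nhds x := hU.mem_nhds hx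
  have hda : DifferentiableAt ℝ a x := (ha.contDiffAt hUx).differentiableAt (by simp)
  have hdp : ∀ k, DifferentiableAt ℝ (pd k u) x := by
    intro k
    have h1 : ContDiffAt ℝ 1 (fderiv ℝ u) x :=
      (hu.contDiffAt hUx).fderiv_right (by
        have : ((2 : ℕ∞) : WithTop ℕ∞) ≤ ((⊤ : ℕ∞) : WithTop ℕ∞) := WithTop.coe_le_coe.mpr le_top
        rw [one_add_one_eq_two]; exact this)
    exact (h1.differentiableAt (by simp)).clm_apply (differentiableAt_const _)
  have hdxp : ∀ j k, DifferentiableAt ℝ (fun y : EuclideanSpace ℝ (Fin n) => y j * pd k u y) x :=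
    fun j k => (coord_diff j x).mul (hdp k)
  have hxp : ∀ i j k, pd i (fun y : EuclideanSpace ℝ (Fin n) => y j * pd k u y) x
      = x j * pd i (pd k u) x + pd k u x * (if j = i then 1 else 0) := by
    intro i j k
    rw [pd_mul_aux i (coord_diff j x) (hdp k), pd_coord]
  have hTd : ∀ i j k, pd i (T j k) x
      = (x j * pd i (pd k u) x + pd k u x * (if j = i then 1 else 0))
        - (x k * pd i (pd j u) x + pd j u x * (if k = i then 1 else 0)) := by
    intro i j k
    have : T j k = fun y => y j * pd k u y - y k * pd j u y := by
      funext y; rw [hT]; ring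
    rw [this, ← hxp, ← hxp]
    exact congrArg (fun l => l (EuclideanSpace.single i 1)) (fderiv_fun_sub (hdxp j k) (hdxp k j))
  have hRd : ∀ i, pd i R x = a x * (∑ k, x k * pd i (pd k u) x + pd i u x)
      + (∑ k, x k * pd k u x) * pd i a x := by
    intro i
    have : R = fun y => a y * ∑ k, y k * pd k u y := funext hR
    rw [this, pd_mul_aux i hda (DifferentiableAt.fun_sum fun k _ => hdxp k k),
      pd_sum_aux i (fun k => hdxp k k)]
    simp [hxp, Finset.sum_add_distrib]
  have hN : ‖x‖ ^ 2 = ∑ i, x i * x i := by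
    rw [EuclideanSpace.norm_sq_eq]
    simp [sq]
  have hNpos : ‖x‖ ^ 2 ≠ 0 := by simpa using hx0
  obtain ⟨c, hc⟩ : ∃ c, c = (∑ i, x i * pd i a x) / ‖x‖ ^ 2 := ⟨_, rfl⟩
  have hak : ∀ k, pd k a x = c * x k := by
    intro k
    rw [hc, div_mul_eq_mul_div, eq_div_iff hNpos, hN, Finset.mul_sum, Finset.sum_mul]
    refine Finset.sum_congr rfl fun j _ => ?_
    linear_combination x j * hrad j k x hx
  have hE := heq x hx
  rw [← hc]
  clear hc
  have hS : ∀ j k, (if j = k then (0 : ℝ)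
      else pd k a x * pd j (T j k) x - pd j a x * pd k (T j k) x)
      = c * ((x k * (x j * pd j (pd k u) x) + x k * pd k u x - x k * x k * pd j (pd j u) x
          - (if j = k then x k * pd k u x else 0))
        + (x j * (x k * pd k (pd j u) x) + x j * pd j u x - x j * x j * pd k (pd k u) x
          - (if j = k then x k * pd k u x else 0))) := by
    intro j k
    by_cases h : j = k
    · subst h; simp; right; ring
    · have h' : k ≠ j := fun e => h e.symm
      simp only [hTd, hak, h, h', if_false, if_true]
      ring
  rw [Finset.sum_congr rfl fun j _ => Finset.sum_congr rfl fun k _ => hS j k]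
  simp only [hRd, hak, hR]
  simp only [hak] at hE
  set E := ∑ k, x k * pd k u x with hEdef
  set L := ∑ i, pd i (pd i u) x with hL
  set Q := ∑ j, ∑ k, x k * (x j * pd j (pd k u) x) with hQ
  have e1 : ∑ i, c * x i * pd i u x = c * E := by
    rw [hEdef, Finset.mul_sum]; exact Finset.sum_congr rfl fun _ _ => by ring
  rw [e1] at hE
  have e2 : ∑ j, c * x j * (a x * (∑ k, x k * pd j (pd k u) x + pd j u x) + E * (c * x j))
      = c * a x * Q + c * a x * E + c * c * E * ‖x‖ ^ 2 := by
    rw [hN, hQ, Finset.mul_sum, Finset.mul_sum]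
    conv_rhs => rw [hEdef, Finset.mul_sum, ← Finset.sum_add_distrib, ← Finset.sum_add_distrib]
    refine Finset.sum_congr rfl fun j _ => ?_
    have : ∑ k, x k * (x j * pd j (pd k u) x) = x j * ∑ k, x k * pd j (pd k u) x := by
      rw [Finset.mul_sum]; exact Finset.sum_congr rfl fun _ _ => by ring
    rw [this]; ring
  have e3 : ∑ j, ∑ k, (x k * (x j * pd j (pd k u) x) + x k * pd k u x
      - x k * x k * pd j (pd j u) x - (if j = k then x k * pd k u x else 0))
      = Q + n * E - ‖x‖ ^ 2 * L - E := by
    simp only [Finset.sum_sub_distrib, Finset.sum_add_distrib, ← Finset.sum_mul, ← hN,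
      ← Finset.mul_sum, ← hL, ← hEdef]
    simp [← hEdef, hQ]
  have e4 : ∑ j, ∑ k, (x j * (x k * pd k (pd j u) x) + x j * pd j u x
      - x j * x j * pd k (pd k u) x - (if j = k then x k * pd k u x else 0))
      = Q + n * E - ‖x‖ ^ 2 * L - E := by
    rw [← e3, Finset.sum_comm]
    refine Finset.sum_congr rfl fun j _ => Finset.sum_congr rfl fun k _ => ?_
    by_cases h : j = k
    · subst h; rfl
    · have h' : k ≠ j := fun e => h e.symm
      simp [h, h']
  rw [e2]
  have e5 : ∀ f g : Fin n → Fin n → ℝ,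
      ∑ j, ∑ k, c * (f j k + g j k) = c * (∑ j, ∑ k, f j k + ∑ j, ∑ k, g j k) := by
    intro f g
    simp only [← Finset.mul_sum, Finset.sum_add_distrib]
  rw [e5, e3, e4]
  linear_combination c * ‖x‖ ^ 2 * hE
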